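/- Let F be a Ferrers diagram of semiperimeter n+1, T ∈ EWtab(F), and S = S(T) its supplementary tableau. If T_{jk} is a cornersupport entry of T, then there exist j' ∈ rows(F) and k' ∈ cols(F) with j' ≠ j and k' ≠ k such that S_{j'k'} induces T_{jk} to be a cornersupport (i.e., S_{j'k'} = 1 − T_{jk} and S_{j'k} = S_{jk'} = T_{jk}), and moreover either T_{jk} = T_{jk'} = 0 and T_{j'k'} = 1 with (j,k'), (j',k') both cells of F, or T_{jk} = T_{j'k} = 1 and T_{j'k'} = 0 with (j',k), (j',k') both cells of F. -/

import Mathlib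

open Classical

/-- A Ferrers diagram of semiperimeter `n + 1`, encoded by the set of its row labels
(labels `0, …, n` run along the south-east border; `0` labels the top row and the
last label `n` is a column label). -/
structure Ferrers (n : ℕ) where
  rows : Finset (Fin (n + 1))
  zero_mem : 0 ∈ rows
  last_not_mem : Fin.last n ∉ rows

namespace Ferrers

/-- `(i, j)` is a cell of the diagram: `i` is a row label, `j` a column label, `i < j`. -/
def Cell {n : ℕ} (F : Ferrers n) (i j : Fin (n + 1)) : Prop :=
  i ∈ F.rows ∧ j ∉ F.rows ∧ i < j

/-- Adjacency in the Ferrers graph `G(F)`. -/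
def Adj {n : ℕ} (F : Ferrers n) (u v : Fin (n + 1)) : Prop :=
  F.Cell u v ∨ F.Cell v u

/-- Degree of a vertex in `G(F)`. -/
noncomputable def deg {n : ℕ} (F : Ferrers n) (v : Fin (n + 1)) : ℕ :=
  {u | F.Adj v u}.ncard

/-- Toppling a single vertex.  The height at the sink `0` is kept equal to `c 0`
(grains sent to the sink vanish); toppling the sink sends one grain to each of
its neighbours. -/
noncomputable def topple {n : ℕ} (F : Ferrers n) (c : Fin (n + 1) → ℕ)
    (v : Fin (n + 1)) : Fin (n + 1) → ℕ :=
  fun u =>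
    if u = 0 then c 0
    else if u = v then c v - F.deg v
    else if F.Adj v u then c u + 1
    else c u

/-- Toppling the vertices of a list in order. -/
noncomputable def toppleList {n : ℕ} (F : Ferrers n) (c : Fin (n + 1) → ℕ)
    (l : List (Fin (n + 1))) : Fin (n + 1) → ℕ :=
  l.foldl F.topple c

/-- Simultaneous toppling of a set of vertices. -/
noncomputable def toppleSet {n : ℕ} (F : Ferrers n) (c : Fin (n + 1) → ℕ)
    (S : Set (Fin (n + 1))) : Fin (n + 1) → ℕ :=
  fun u =>
    if u = 0 then c 0
    else c u + {w ∈ S | F.Adj w u}.ncard - if u ∈ S then F.deg u else 0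

/-- A configuration is stable if every non-sink vertex has fewer grains than its degree. -/
def Stable {n : ℕ} (F : Ferrers n) (c : Fin (n + 1) → ℕ) : Prop :=
  ∀ v, v ≠ 0 → c v < F.deg v

/-- A Dhar (burning) ordering for `c`: an ordering `v₀ = 0, v₁, …, vₙ` of all the
vertices such that each `vᵢ` (`i ≥ 1`) is unstable after toppling `v₀, …, v_{i-1}`. -/
def DharSeq {n : ℕ} (F : Ferrers n) (c : Fin (n + 1) → ℕ) (l : List (Fin (n + 1))) : Prop :=
  l.length = n + 1 ∧ l.Nodup ∧ l.head? = some 0 ∧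
    ∀ i, ∀ h : i < l.length, 1 ≤ i →
      F.deg (l.get ⟨i, h⟩) ≤ F.toppleList c (l.take i) (l.get ⟨i, h⟩)

/-- Recurrent configurations (via Dhar's criterion).  The height at the sink is
normalised to `0`. -/
def Recurrent {n : ℕ} (F : Ferrers n) (c : Fin (n + 1) → ℕ) : Prop :=
  c 0 = 0 ∧ F.Stable c ∧ ∃ l, F.DharSeq c l

/-- Minimal recurrent configurations: recurrent with minimal total number of grains. -/
def RecMin {n : ℕ} (F : Ferrers n) (c : Fin (n + 1) → ℕ) : Prop :=
  F.Recurrent c ∧ ∀ c', F.Recurrent c' → (∑ v, c v) ≤ ∑ v, c' v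

/-- Canonical toppling: block `0` is `{0}` (the sink); from then on, blocks with odd
index are the sets of currently unstable column vertices and blocks with even index
the sets of currently unstable row vertices.  The first component is the configuration
just before toppling the block recorded in the second component. -/
noncomputable def canonAux {n : ℕ} (F : Ferrers n) (c : Fin (n + 1) → ℕ) :
    ℕ → ((Fin (n + 1) → ℕ) × Set (Fin (n + 1)))
  | 0 => (c, {0})
  | k + 1 =>
    let c' := F.toppleSet (canonAux F c k).1 (canonAux F c k).2
    (c', {v | v ≠ 0 ∧ (if k % 2 = 0 then v ∉ F.rows else v ∈ F.rows) ∧ F.deg v ≤ c' v})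

/-- The `k`-th block of the canonical toppling of `c`:
`canonTop F c 0 = U⁰ = {0}`, `canonTop F c (2i-1) = Vⁱ`, `canonTop F c (2i) = Uⁱ`. -/
noncomputable def canonTop {n : ℕ} (F : Ferrers n) (c : Fin (n + 1) → ℕ) (k : ℕ) :
    Set (Fin (n + 1)) :=
  (F.canonAux c k).2

/-- The configuration just before toppling the `k`-th block of the canonical toppling. -/
noncomputable def canonConfig {n : ℕ} (F : Ferrers n) (c : Fin (n + 1) → ℕ) (k : ℕ) :
    Fin (n + 1) → ℕ :=
  (F.canonAux c k).1

/-- The index of the block of the canonical toppling of `c` containing `v`. -/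
noncomputable def bIdx {n : ℕ} (F : Ferrers n) (c : Fin (n + 1) → ℕ) (v : Fin (n + 1)) : ℕ :=
  sInf {k | v ∈ F.canonTop c k}

/-- `T` is a EW-tableau on `F` (entries of non-cells are normalised to `false`):
the top row contains only `1`s, every other row contains a `0`, and there is no
rectangle with two diagonally opposite `0`s and two `1`s in the other corners. -/
def IsEW {n : ℕ} (F : Ferrers n) (T : Fin (n + 1) → Fin (n + 1) → Bool) : Prop :=
  (∀ i j, ¬F.Cell i j → T i j = false) ∧
  (∀ j, F.Cell 0 j → T 0 j = true) ∧
  (∀ i, i ∈ F.rows → i ≠ 0 → ∃ j, F.Cell i j ∧ T i j = false) ∧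
  (∀ i i' j j', F.Cell i j → F.Cell i j' → F.Cell i' j → F.Cell i' j' →
    T i j = T i' j' → T i j' = T i' j → T i j = T i j')

/-- The configuration associated to a tableau: row vertices count the `1`s in their
row, column vertices count the `0`s in their column (the sink is normalised to `0`). -/
noncomputable def phiTC {n : ℕ} (F : Ferrers n) (T : Fin (n + 1) → Fin (n + 1) → Bool) :
    Fin (n + 1) → ℕ :=
  fun v =>
    if v = 0 then 0
    else if v ∈ F.rows then {j | F.Cell v j ∧ T v j = true}.ncard
    else {i | F.Cell i v ∧ T i v = false}.ncard

/-- The tableau associated to a (minimal recurrent) configuration: a cell `(i, j)`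
gets a `1` exactly when `i` lies in an earlier block than `j` in the canonical
toppling of `c`. -/
noncomputable def phiCT {n : ℕ} (F : Ferrers n) (c : Fin (n + 1) → ℕ) :
    Fin (n + 1) → Fin (n + 1) → Bool :=
  fun i j => if F.Cell i j ∧ F.bIdx c i < F.bIdx c j then true else false

/-- The supplementary tableau of `T`: `S i j = 1` exactly when the row vertex `i`
lies in an earlier block than the column vertex `j` in `CanonTop (φ_TC T)`. -/
noncomputable def suppS {n : ℕ} (F : Ferrers n) (T : Fin (n + 1) → Fin (n + 1) → Bool)
    (i j : Fin (n + 1)) : Bool :=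
  if F.bIdx (F.phiTC T) i < F.bIdx (F.phiTC T) j then true else false

/-- The entry of `T` in cell `(j, k)` is a cornersupport entry. -/
def Cornersupport {n : ℕ} (F : Ferrers n) (T : Fin (n + 1) → Fin (n + 1) → Bool)
    (j k : Fin (n + 1)) : Prop :=
  ∃ j' k', j' ∈ F.rows ∧ k' ∉ F.rows ∧ j' ≠ j ∧ k' ≠ k ∧
    F.suppS T j' k' = !(T j k) ∧ F.suppS T j' k = T j k ∧ F.suppS T j k' = T j k

/-- `ν_v(T)`: the number of non-cornersupport `0`s in row `v` (if `v` is a row label),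
resp. non-cornersupport `1`s in column `v` (if `v` is a column label). -/
noncomputable def nu {n : ℕ} (F : Ferrers n) (T : Fin (n + 1) → Fin (n + 1) → Bool)
    (v : Fin (n + 1)) : ℕ :=
  if v ∈ F.rows then {k | F.Cell v k ∧ T v k = false ∧ ¬F.Cornersupport T v k}.ncard
  else {i | F.Cell i v ∧ T i v = true ∧ ¬F.Cornersupport T i v}.ncard

/-- `μ_v(c)`: if `v ∈ Uⁱ`, the number of `k ∈ Vⁱ` with `k > v`; if `v ∈ Vⁱ`,
the number of `k ∈ U^{i-1}` with `k < v`.  In both cases the relevant block is the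
one immediately preceding the block of `v`. -/
noncomputable def mu {n : ℕ} (F : Ferrers n) (c : Fin (n + 1) → ℕ) (v : Fin (n + 1)) : ℕ :=
  if v ∈ F.rows then {k | v < k ∧ k ∈ F.canonTop c (F.bIdx c v - 1)}.ncard
  else {k | k < v ∧ k ∈ F.canonTop c (F.bIdx c v - 1)}.ncard

/-- The minimal recurrent configuration with the same canonical toppling as `c`:
if `j ∈ Uⁱ` then `minrec c j = |{ℓ ∈ Vᵏ : j < ℓ, k > i}|`, and if `j ∈ Vⁱ` then
`minrec c j = |{ℓ ∈ Uᵏ : ℓ < j, k ≥ i}|` (blocks `Vᵏ` sit at odd index `2k - 1`,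
blocks `Uᵏ` at even index `2k`). -/
noncomputable def minrecFun {n : ℕ} (F : Ferrers n) (c : Fin (n + 1) → ℕ) :
    Fin (n + 1) → ℕ :=
  fun j =>
    if j = 0 then 0
    else if j ∈ F.rows then
      {l | j < l ∧ ∃ k, F.bIdx c j < 2 * k + 1 ∧ l ∈ F.canonTop c (2 * k + 1)}.ncard
    else
      {l | l < j ∧ ∃ k, F.bIdx c j < 2 * k ∧ l ∈ F.canonTop c (2 * k)}.ncard

/-- The number of edges of `G(F)` (equivalently, the number of cells of `F`). -/
noncomputable def edgeCount {n : ℕ} (F : Ferrers n) : ℕ :=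
  {p : Fin (n + 1) × Fin (n + 1) | F.Cell p.1 p.2}.ncard

end Ferrers

/-!
Read `T` as an orientation of `G(F)`: an edge goes from its row to its column at a `1`, and from its
column to its row at a `0`. The rectangle condition forbids oriented 4-cycles, hence all oriented
cycles, and the sink `0` is the only source. Since `φ_TC(T)` records outdegrees, a vertex becomes
unstable exactly when all its in-neighbours have toppled, so the block index `b v` of `v` is the
length of a longest oriented path ending in `v`; in particular every vertex with `b v ≥ 2` is the
end of an oriented path `w → u → v` through consecutive blocks.

Rows have even and columns odd block index, so a cornersupport entry forces the block indices of
`j` and `k` to differ by at least `3`. Taking such a path into the later of the two, its remaining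
vertices are the required `j'` and `k'`, and its two arcs are the required entries of `T`.
-/

/-- `ℓ` is the level function of the relation `r`: `ℓ v` is the length of a longest `r`-chain
ending in `v`. The two fields say that `ℓ v = max {ℓ u + 1 | r u v}`, with `max ∅ = 0`. For the
orientation of `G(F)` given by a EW-tableau it turns out to be the index of the toppling block. -/
structure IsLevelFunction {α : Type*} (r : α → α → Prop) (ℓ : α → ℕ) : Prop where
  lt_of_rel : ∀ {u v}, r u v → ℓ u < ℓ v
  exists_rel : ∀ {v}, ℓ v ≠ 0 → ∃ u, r u v ∧ ℓ u + 1 = ℓ v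

namespace IsLevelFunction

variable {α : Type*} {r : α → α → Prop} {ℓ : α → ℕ}

theorem exists_of_wellFounded (wf : WellFounded r) (hfin : ∀ v, {u | r u v}.Finite) :
    ∃ ℓ, IsLevelFunction r ℓ := by
  let step (v : α) (level : ∀ u, r u v → ℕ) : ℕ :=
    (hfin v).toFinset.attach.sup fun u => level u ((hfin v).mem_toFinset.1 u.2) + 1
  have level_eq : ∀ v, wf.fix step v = (hfin v).toFinset.sup fun u => wf.fix step u + 1 :=
    fun v => by rw [wf.fix_eq]; exact Finset.sup_attach _ fun u => wf.fix step u + 1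
  refine ⟨wf.fix step, fun {u v} h => ?_, fun {v} hv => ?_⟩
  · rw [level_eq v]
    exact Finset.le_sup (f := fun u => wf.fix step u + 1) ((hfin v).mem_toFinset.2 h)
  · rw [level_eq v] at hv ⊢
    have hne : (hfin v).toFinset.Nonempty := by
      by_contra hempty
      simp [Finset.not_nonempty_iff_eq_empty.1 hempty] at hv
    obtain ⟨u, hu, hmax⟩ := Finset.exists_mem_eq_sup _ hne fun u => wf.fix step u + 1
    exact ⟨u, (hfin v).mem_toFinset.1 hu, hmax.symm⟩

theorem forall_rel_lt_iff (hℓ : IsLevelFunction r ℓ) {v : α} {k : ℕ} :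
    (∀ u, r u v → ℓ u < k) ↔ ℓ v ≤ k := by
  refine ⟨fun h => ?_, fun h u hu => (hℓ.lt_of_rel hu).trans_le h⟩
  by_contra! hk
  obtain ⟨u, hu, hlevel⟩ := hℓ.exists_rel (Nat.ne_zero_of_lt hk)
  have := h u hu
  omega

theorem exists_rel_rel (hℓ : IsLevelFunction r ℓ) {v : α} (hv : 2 ≤ ℓ v) :
    ∃ u w, r u v ∧ r w u ∧ ℓ u + 1 = ℓ v ∧ ℓ w + 2 = ℓ v := by
  obtain ⟨u, huv, hu⟩ := hℓ.exists_rel (v := v) (by omega)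
  obtain ⟨w, hwu, hw⟩ := hℓ.exists_rel (v := u) (by omega)
  exact ⟨u, w, huv, hwu, hu, by omega⟩

end IsLevelFunction

namespace Ferrers

variable {n : ℕ} {F : Ferrers n} {T : Fin (n + 1) → Fin (n + 1) → Bool}

/-- The orientation of `G(F)` encoded by `T`: an edge goes from row to column where `T` has
a `1`, and from column to row where `T` has a `0`. -/
def Arc (F : Ferrers n) (T : Fin (n + 1) → Fin (n + 1) → Bool) (u v : Fin (n + 1)) : Prop :=
  (F.Cell u v ∧ T u v = true) ∨ (F.Cell v u ∧ T v u = false)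

theorem Arc.cell_of_mem_rows {u v : Fin (n + 1)} (h : F.Arc T u v) (hv : v ∈ F.rows) :
    F.Cell v u ∧ T v u = false :=
  h.resolve_left fun h' => h'.1.2.1 hv

theorem Arc.cell_of_notMem_rows {u v : Fin (n + 1)} (h : F.Arc T u v) (hv : v ∉ F.rows) :
    F.Cell u v ∧ T u v = true :=
  h.resolve_right fun h' => hv h'.1.1

theorem Arc.mem_rows_iff {u v : Fin (n + 1)} (h : F.Arc T u v) : u ∈ F.rows ↔ v ∉ F.rows := by
  rcases h with ⟨⟨h₁, h₂, -⟩, -⟩ | ⟨⟨h₁, h₂, -⟩, -⟩ <;> tauto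

theorem Arc.asymm {u v : Fin (n + 1)} (huv : F.Arc T u v) : ¬F.Arc T v u := fun hvu => by
  by_cases hv : v ∈ F.rows
  · have hzero := (huv.cell_of_mem_rows hv).2
    have hone := (hvu.cell_of_notMem_rows (hvu.mem_rows_iff.1 hv)).2
    simp [hzero] at hone
  · have hone := (huv.cell_of_notMem_rows hv).2
    have hzero := (hvu.cell_of_mem_rows (huv.mem_rows_iff.2 hv)).2
    simp [hzero] at hone

theorem adj_iff_arc {u v : Fin (n + 1)} : F.Adj u v ↔ F.Arc T u v ∨ F.Arc T v u := by
  unfold Adj Arc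
  cases T u v <;> cases T v u <;> simp <;> tauto

theorem deg_eq_indegree_add_outdegree (T : Fin (n + 1) → Fin (n + 1) → Bool) (v : Fin (n + 1)) :
    F.deg v = {u | F.Arc T u v}.ncard + {u | F.Arc T v u}.ncard := by
  have hdisj : Disjoint {u | F.Arc T u v} {u | F.Arc T v u} :=
    Set.disjoint_left.2 fun _ h => Arc.asymm h
  rw [deg, ← Set.ncard_union_eq hdisj]
  congr 1
  ext u
  exact adj_iff_arc.trans or_comm

theorem phiTC_eq_outdegree {v : Fin (n + 1)} (hv : v ≠ 0) :
    F.phiTC T v = {u | F.Arc T v u}.ncard := by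
  rw [phiTC, if_neg hv]
  split_ifs with h <;> congr 1 <;> ext u <;> simp only [Set.mem_ofPred_eq, Arc, Cell] <;> tauto

theorem IsEW.not_arc_zero (hT : F.IsEW T) (u : Fin (n + 1)) : ¬F.Arc T u 0 := fun h => by
  obtain ⟨hcell, hzero⟩ := h.cell_of_mem_rows F.zero_mem
  simp [hT.2.1 u hcell] at hzero

theorem IsEW.exists_arc (hT : F.IsEW T) {v : Fin (n + 1)} (hv : v ≠ 0) :
    ∃ u, F.Arc T u v := by
  by_cases h : v ∈ F.rows
  · obtain ⟨j, hj⟩ := hT.2.2.1 v h hv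
    exact ⟨j, .inr hj⟩
  · have hcell : F.Cell 0 v := ⟨F.zero_mem, h, Fin.pos_of_ne_zero hv⟩
    exact ⟨0, .inl ⟨hcell, hT.2.1 v hcell⟩⟩

theorem IsEW.not_arc_four_cycle (hT : F.IsEW T) {u v w x : Fin (n + 1)} (huv : F.Arc T u v)
    (hvw : F.Arc T v w) (hwx : F.Arc T w x) : ¬F.Arc T x u := by
  have from_row : ∀ {a b c d : Fin (n + 1)}, a ∈ F.rows → F.Arc T a b → F.Arc T b c →
      F.Arc T c d → ¬F.Arc T d a := fun {a b c d} ha hab hbc hcd hda => by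
    have hb := hab.mem_rows_iff.1 ha
    have hc : c ∈ F.rows := by simpa [hb] using hbc.mem_rows_iff
    obtain ⟨hab, hone⟩ := hab.cell_of_notMem_rows hb
    obtain ⟨hcb, hzero⟩ := hbc.cell_of_mem_rows hc
    obtain ⟨hcd, hone'⟩ := hcd.cell_of_notMem_rows (hcd.mem_rows_iff.1 hc)
    obtain ⟨had, hzero'⟩ := hda.cell_of_mem_rows ha
    have := hT.2.2.2 a c b d hab had hcb hcd (hone.trans hone'.symm) (hzero'.trans hzero.symm)
    simp [hone, hzero'] at this
  by_cases hu : u ∈ F.rows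
  · exact from_row hu huv hvw hwx
  · exact fun hxu => from_row (by simpa [hu] using huv.mem_rows_iff) hvw hwx hxu huv

theorem IsEW.exists_forall_not_arc (hT : F.IsEW T) (S : Finset (Fin (n + 1)))
    (hS : S.Nonempty) : ∃ v ∈ S, ∀ u ∈ S, ¬F.Arc T u v := by
  induction S using Finset.strongInduction with
  | H S ih =>
    by_contra! hpred
    let k := S.max' hS
    have hkS : k ∈ S := S.max'_mem hS
    have hk : k ∉ F.rows := fun hk => by
      obtain ⟨u, hu, huk⟩ := hpred k hkS
      exact (S.le_max' u hu).not_gt (huk.cell_of_mem_rows hk).1.2.2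
    -- `S'` is again closed under taking some predecessor: on a path `u → v → i → k` in `S`, the row
    -- `u` meets the last column `k` in a cell, whose edge cannot close a 4-cycle, so `u → k`.
    let S' := S.filter fun v => F.Arc T v k ∨ ∃ i ∈ S, F.Arc T i k ∧ F.Arc T v i
    have hS'S : S' ⊂ S := by
      refine Finset.filter_ssubset.2 ⟨k, hkS, ?_⟩
      rintro (hkk | ⟨i, -, hik, hki⟩)
      exacts [hkk.asymm hkk, hik.asymm hki]
    obtain ⟨i₀, hi₀, hi₀k⟩ := hpred k hkS
    obtain ⟨v, hvS', hsource⟩ := ih S' hS'S ⟨i₀, Finset.mem_filter.2 ⟨hi₀, .inl hi₀k⟩⟩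
    obtain ⟨hvS, hv⟩ := Finset.mem_filter.1 hvS'
    obtain ⟨u, hu, huv⟩ := hpred v hvS
    refine hsource u (Finset.mem_filter.2 ⟨hu, ?_⟩) huv
    rcases hv with hvk | ⟨i, -, hik, hvi⟩
    · exact .inr ⟨v, hvS, hvk, huv⟩
    · have hi := hik.mem_rows_iff.2 hk
      have hu_rows := huv.mem_rows_iff.2 fun hv_rows => hvi.mem_rows_iff.1 hv_rows hi
      have hlt : u < k := (S.le_max' u hu).lt_of_ne fun (h : u = k) => hk (h ▸ hu_rows)
      have hadj : F.Adj u k := .inl ⟨hu_rows, hk, hlt⟩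
      exact .inl ((adj_iff_arc.1 hadj).resolve_right (hT.not_arc_four_cycle huv hvi hik))

theorem IsEW.wellFounded_arc (hT : F.IsEW T) : WellFounded (F.Arc T) :=
  WellFounded.wellFounded_iff_has_min.2 fun S hS => by
    simpa using hT.exists_forall_not_arc S.toFinset (Set.toFinset_nonempty.2 hS)

theorem IsEW.exists_isLevelFunction_arc (hT : F.IsEW T) :
    ∃ ℓ, IsLevelFunction (F.Arc T) ℓ :=
  IsLevelFunction.exists_of_wellFounded hT.wellFounded_arc fun _ => Set.toFinite _

theorem IsEW.level_eq_zero_iff (hT : F.IsEW T) {ℓ : Fin (n + 1) → ℕ}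
    (hℓ : IsLevelFunction (F.Arc T) ℓ) {v : Fin (n + 1)} : ℓ v = 0 ↔ v = 0 := by
  refine ⟨fun hv => ?_, ?_⟩
  · by_contra hne
    obtain ⟨u, hu⟩ := hT.exists_arc hne
    have := hℓ.lt_of_rel hu
    omega
  · rintro rfl
    exact Nat.le_zero.1 (hℓ.forall_rel_lt_iff.1 fun u hu => absurd hu (hT.not_arc_zero u))

theorem even_level_iff {ℓ : Fin (n + 1) → ℕ} (hℓ : IsLevelFunction (F.Arc T) ℓ)
    (hsource : ∀ v, ℓ v = 0 → v ∈ F.rows) (v : Fin (n + 1)) : Even (ℓ v) ↔ v ∈ F.rows := by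
  induction hv : ℓ v generalizing v with
  | zero => simp [hsource v hv]
  | succ k ih =>
    obtain ⟨u, huv, hu⟩ := hℓ.exists_rel (v := v) (by omega)
    rw [Nat.even_add_one, ih u (by omega), huv.mem_rows_iff, not_not]

theorem canonConfig_succ (c : Fin (n + 1) → ℕ) (k : ℕ) :
    F.canonConfig c (k + 1) = F.toppleSet (F.canonConfig c k) (F.canonTop c k) := rfl

theorem mem_canonTop_succ {c : Fin (n + 1) → ℕ} {k : ℕ} {v : Fin (n + 1)} :
    v ∈ F.canonTop c (k + 1) ↔
      v ≠ 0 ∧ (Even (k + 1) ↔ v ∈ F.rows) ∧ F.deg v ≤ F.canonConfig c (k + 1) v := by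
  have parity : (if k % 2 = 0 then v ∉ F.rows else v ∈ F.rows) ↔
      (Even (k + 1) ↔ v ∈ F.rows) := by
    rw [Nat.even_add_one, Nat.even_iff]
    split_ifs with h <;> simp [h]
  rw [← parity]
  rfl

theorem deg_le_canonConfig {c : Fin (n + 1) → ℕ} {k : ℕ} {v : Fin (n + 1)} (hv : v ≠ 0)
    (hmem : v ∈ F.canonTop c k) : F.deg v ≤ F.canonConfig c k v := by
  cases k with
  | zero => exact absurd hmem hv
  | succ k => exact (mem_canonTop_succ.1 hmem).2.2

theorem canonConfig_add_deg {c ℓ : Fin (n + 1) → ℕ} {k : ℕ}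
    (hblocks : ∀ m < k, F.canonTop c m = {v | ℓ v = m}) {v : Fin (n + 1)} (hv : v ≠ 0) :
    F.canonConfig c k v + (if ℓ v < k then F.deg v else 0) =
      c v + {u | F.Adj u v ∧ ℓ u < k}.ncard := by
  induction k with
  | zero => simp [canonConfig, canonAux]
  | succ k ih =>
    have hprev := ih fun m hm => hblocks m (hm.trans k.lt_succ_self)
    have hblock := hblocks k k.lt_succ_self
    have hcard : {u | F.Adj u v ∧ ℓ u < k + 1}.ncard =
        {u | F.Adj u v ∧ ℓ u < k}.ncard + {u ∈ {u | ℓ u = k} | F.Adj u v}.ncard := by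
      rw [← Set.ncard_union_eq]
      · congr 1
        ext u
        simp only [Set.mem_union, Set.mem_ofPred_eq, Nat.lt_succ_iff_lt_or_eq]
        tauto
      · exact Set.disjoint_left.2 fun u h h' => h.2.ne h'.1
    have hunstable : ℓ v = k → F.deg v ≤ F.canonConfig c k v := fun h =>
      deg_le_canonConfig hv (hblock ▸ h)
    rw [hcard, canonConfig_succ, toppleSet, if_neg hv, hblock]
    simp only [Set.mem_ofPred_eq]
    split_ifs at hprev ⊢ <;> omega

section LevelFunction

variable {ℓ : Fin (n + 1) → ℕ} (hℓ : IsLevelFunction (F.Arc T) ℓ)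
  (hsource : ∀ v, ℓ v = 0 ↔ v = 0)

include hℓ hsource

theorem deg_le_canonConfig_phiTC_iff {k : ℕ}
    (hblocks : ∀ m < k, F.canonTop (F.phiTC T) m = {v | ℓ v = m}) {v : Fin (n + 1)}
    (hv : v ≠ 0) : F.deg v ≤ F.canonConfig (F.phiTC T) k v ↔ ℓ v = k := by
  have hconfig := canonConfig_add_deg hblocks hv
  rw [phiTC_eq_outdegree hv] at hconfig
  have hdeg := deg_eq_indegree_add_outdegree (F := F) T v
  split_ifs at hconfig with hlt
  · have hle : {u | F.Adj u v ∧ ℓ u < k}.ncard ≤ F.deg v :=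
      Set.ncard_le_ncard (fun u hu => Or.symm hu.1)
    have hpos : 0 < {u | F.Arc T u v}.ncard := by
      obtain ⟨u, hu, -⟩ := hℓ.exists_rel (mt (hsource v).1 hv)
      exact (Set.ncard_pos (Set.toFinite _)).2 ⟨u, hu⟩
    omega
  · have hsub : {u | F.Adj u v ∧ ℓ u < k} ⊆ {u | F.Arc T u v} := fun u ⟨hadj, hu⟩ =>
      (adj_iff_arc.1 hadj).resolve_right fun hvu => hlt ((hℓ.lt_of_rel hvu).trans hu)
    calc F.deg v ≤ F.canonConfig (F.phiTC T) k v
      _ ↔ {u | F.Arc T u v}.ncard ≤ {u | F.Adj u v ∧ ℓ u < k}.ncard := by omega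
      _ ↔ {u | F.Arc T u v} ⊆ {u | F.Adj u v ∧ ℓ u < k} :=
        ⟨fun h => (Set.eq_of_subset_of_ncard_le hsub h).ge, fun h => Set.ncard_le_ncard h⟩
      _ ↔ ∀ u, F.Arc T u v → ℓ u < k :=
        ⟨fun h u hu => (h hu).2, fun h u hu => ⟨adj_iff_arc.2 (.inl hu), h u hu⟩⟩
      _ ↔ ℓ v ≤ k := hℓ.forall_rel_lt_iff
      _ ↔ ℓ v = k := by omega

theorem canonTop_phiTC_eq (k : ℕ) : F.canonTop (F.phiTC T) k = {v | ℓ v = k} := by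
  induction k using Nat.strong_induction_on with
  | h k ih =>
    ext v
    cases k with
    | zero => exact (hsource v).symm
    | succ k =>
      have hparity := even_level_iff hℓ (fun v hv => (hsource v).1 hv ▸ F.zero_mem) v
      have hunstable (hv : v ≠ 0) := deg_le_canonConfig_phiTC_iff hℓ hsource ih hv
      rw [mem_canonTop_succ]
      refine ⟨fun ⟨hv, _, hdeg⟩ => (hunstable hv).1 hdeg, fun hlevel => ?_⟩
      have hv : v ≠ 0 := fun hv => absurd (hlevel.symm.trans ((hsource v).2 hv)) k.succ_ne_zero
      exact ⟨hv, hlevel ▸ hparity, (hunstable hv).2 hlevel⟩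

theorem bIdx_phiTC_eq : F.bIdx (F.phiTC T) = ℓ := by
  ext v
  simp [bIdx, canonTop_phiTC_eq hℓ hsource]

end LevelFunction

theorem IsEW.isLevelFunction_bIdx (hT : F.IsEW T) :
    IsLevelFunction (F.Arc T) (F.bIdx (F.phiTC T)) := by
  obtain ⟨ℓ, hℓ⟩ := hT.exists_isLevelFunction_arc
  rwa [bIdx_phiTC_eq hℓ fun _ => hT.level_eq_zero_iff hℓ]

theorem IsEW.even_bIdx_iff (hT : F.IsEW T) (v : Fin (n + 1)) :
    Even (F.bIdx (F.phiTC T) v) ↔ v ∈ F.rows :=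
  have hℓ := hT.isLevelFunction_bIdx
  even_level_iff hℓ (fun _ hv => (hT.level_eq_zero_iff hℓ).1 hv ▸ F.zero_mem) v

theorem suppS_eq_true {i j : Fin (n + 1)} :
    F.suppS T i j = true ↔ F.bIdx (F.phiTC T) i < F.bIdx (F.phiTC T) j := by
  simp [suppS]

theorem suppS_eq_false {i j : Fin (n + 1)} :
    F.suppS T i j = false ↔ F.bIdx (F.phiTC T) j ≤ F.bIdx (F.phiTC T) i := by
  simp [suppS]

theorem IsEW.bIdx_ne (hT : F.IsEW T) {i j : Fin (n + 1)} (hi : i ∈ F.rows) (hj : j ∉ F.rows) :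
    F.bIdx (F.phiTC T) i ≠ F.bIdx (F.phiTC T) j := fun h =>
  hj ((hT.even_bIdx_iff j).1 (h ▸ (hT.even_bIdx_iff i).2 hi))

theorem Cornersupport.bIdx_row_add_three_le (hT : F.IsEW T) {j k : Fin (n + 1)}
    (hjk : T j k = true) (h : F.Cornersupport T j k) :
    F.bIdx (F.phiTC T) j + 3 ≤ F.bIdx (F.phiTC T) k := by
  obtain ⟨j', k', hj', hk', -, -, h₁, h₂, h₃⟩ := h
  simp only [hjk, Bool.not_true, suppS_eq_true, suppS_eq_false] at h₁ h₂ h₃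
  have := hT.bIdx_ne hj' hk'
  omega

theorem Cornersupport.bIdx_col_add_three_le (hT : F.IsEW T) {j k : Fin (n + 1)}
    (hj : j ∈ F.rows) (hk : k ∉ F.rows) (hjk : T j k = false) (h : F.Cornersupport T j k) :
    F.bIdx (F.phiTC T) k + 3 ≤ F.bIdx (F.phiTC T) j := by
  obtain ⟨j', k', hj', hk', -, -, h₁, h₂, h₃⟩ := h
  simp only [hjk, Bool.not_false, suppS_eq_true, suppS_eq_false] at h₁ h₂ h₃
  have := hT.bIdx_ne hj' hk
  have := hT.bIdx_ne hj hk'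
  omega

end Ferrers

/-- **Lemma.** If the entry of a cell `(j, k)` of `T` is a
cornersupport, then some `S_{j'k'}` induces it, and moreover either
`T_{jk} = T_{jk'} = 0` and `T_{j'k'} = 1` with `(j, k')`, `(j', k')` cells of `F`,
or `T_{jk} = T_{j'k} = 1` and `T_{j'k'} = 0` with `(j', k)`, `(j', k')` cells of `F`. -/
theorem cornersupport_three_cells {n : ℕ} (F : Ferrers n)
    (T : Fin (n + 1) → Fin (n + 1) → Bool) (hT : F.IsEW T)
    (j k : Fin (n + 1)) (hcell : F.Cell j k) (hcs : F.Cornersupport T j k) :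
    ∃ j' k' : Fin (n + 1), j' ∈ F.rows ∧ k' ∉ F.rows ∧ j' ≠ j ∧ k' ≠ k ∧
      F.suppS T j' k' = !(T j k) ∧ F.suppS T j' k = T j k ∧ F.suppS T j k' = T j k ∧
      ((T j k = false ∧ T j k' = false ∧ T j' k' = true ∧ F.Cell j k' ∧ F.Cell j' k') ∨
       (T j k = true ∧ T j' k = true ∧ T j' k' = false ∧ F.Cell j' k ∧ F.Cell j' k')) := by
  cases hjk : T j k with
  | false =>
    have hgap := hcs.bIdx_col_add_three_le hT hcell.1 hcell.2.1 hjk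
    obtain ⟨k', j', hk'j, hj'k', hk', hj'⟩ :=
      hT.isLevelFunction_bIdx.exists_rel_rel (v := j) (by omega)
    obtain ⟨hjk'_cell, hjk'⟩ := hk'j.cell_of_mem_rows hcell.1
    obtain ⟨hj'k'_cell, hj'k'⟩ := hj'k'.cell_of_notMem_rows hjk'_cell.2.1
    simp only [Bool.not_false, Ferrers.suppS_eq_true, Ferrers.suppS_eq_false]
    refine ⟨j', k', hj'k'_cell.1, hjk'_cell.2.1, ?_, ?_, by omega, by omega, by omega,
      .inl ⟨trivial, hjk', hj'k', hjk'_cell, hj'k'_cell⟩⟩ <;> rintro rfl <;> omega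
  | true =>
    have hgap := hcs.bIdx_row_add_three_le hT hjk
    obtain ⟨j', k', hj'k, hk'j', hj', hk'⟩ :=
      hT.isLevelFunction_bIdx.exists_rel_rel (v := k) (by omega)
    obtain ⟨hj'k_cell, hj'k⟩ := hj'k.cell_of_notMem_rows hcell.2.1
    obtain ⟨hj'k'_cell, hj'k'⟩ := hk'j'.cell_of_mem_rows hj'k_cell.1
    simp only [Bool.not_true, Ferrers.suppS_eq_true, Ferrers.suppS_eq_false]
    refine ⟨j', k', hj'k_cell.1, hj'k'_cell.2.1, ?_, ?_, by omega, by omega, by omega,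
      .inr ⟨trivial, hj'k, hj'k', hj'k_cell, hj'k'_cell⟩⟩ <;> rintro rfl <;> omega
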